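/- Let K be a finite field with |K| = Q, let m ≥ 1 be a natural number, and let P₀ be a set of points of PG(3,Q) with |P₀| = m(Q+1) such that every plane of PG(3,Q) contains exactly m or exactly m+Q points of P₀. Then every point of P₀ lies on exactly m+Q planes containing exactly m+Q points of P₀, and every point of PG(3,Q) not in P₀ lies on exactly m planes containing exactly m+Q points of P₀. -/

import Mathlib

open scoped Classical

lemma exists_point {K V : Type*} [Field K] [AddCommGroup V] [Module K V] (H : Submodule K V)
    (hf : Module.finrank K H = 1) : ∃ x : Projectivization K V, x.submodule = H := by
  obtain ⟨v, hv, hv0⟩ := (Submodule.ne_bot_iff H).1 (by rintro rfl; simp at hf)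
  refine ⟨Projectivization.mk K v hv0, ?_⟩
  rw [Projectivization.submodule_mk]
  haveI : FiniteDimensional K H := Module.finite_of_finrank_pos (by omega)
  refine Submodule.eq_of_le_of_finrank_eq ?_ ?_
  · simpa using hv
  · rw [finrank_span_singleton hv0, hf]

lemma exists_point_map {K V : Type*} [Field K] [AddCommGroup V] [Module K V]
    (A B : Submodule K V) (hle : B ≤ A) (hf : Module.finrank K B = 1) :
    ∃ x : Projectivization K A, x.submodule.map A.subtype = B := by
  obtain ⟨x, hx⟩ := exists_point (B.comap A.subtype)
    (by rw [(Submodule.comapSubtypeEquivOfLe hle).finrank_eq, hf])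
  exact ⟨x, by rw [hx, Submodule.map_comap_subtype, inf_eq_right.2 hle]⟩

set_option maxHeartbeats 1000000 in
lemma planes_through (K : Type*) [Field K] [Fintype K] (U : Submodule K (Fin 4 → K)) :
    {W : Submodule K (Fin 4 → K) | Module.finrank K W = 3 ∧ U ≤ W}.ncard =
      ∑ i ∈ Finset.range (4 - Module.finrank K U), (Fintype.card K) ^ i := by
  have hA : Module.finrank K U.dualAnnihilator = 4 - Module.finrank K U := by
    have := Subspace.finrank_add_finrank_dualAnnihilator_eq U
    simp at this
    omega
  rw [← Nat.card_eq_fintype_card, ← Projectivization.card_of_finrank K U.dualAnnihilator hA]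
  let g : Projectivization K U.dualAnnihilator → Submodule K (Fin 4 → K) :=
    fun x => (x.submodule.map U.dualAnnihilator.subtype).dualCoannihilator
  have hg : Function.Injective g := by
    intro x y h
    have h2 := congrArg Submodule.dualAnnihilator h
    simp only [g, Subspace.dualCoannihilator_dualAnnihilator_eq] at h2
    exact Projectivization.submodule_injective
      (Submodule.map_injective_of_injective (Submodule.subtype_injective _) h2)
  have hr : Set.range g = {W : Submodule K (Fin 4 → K) | Module.finrank K W = 3 ∧ U ≤ W} := by
    ext W
    constructor
    · rintro ⟨x, rfl⟩
      refine ⟨?_, ?_⟩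
      · have h1 := Subspace.finrank_add_finrank_dualCoannihilator_eq
          (x.submodule.map U.dualAnnihilator.subtype)
        rw [Submodule.finrank_map_subtype_eq, Projectivization.finrank_submodule] at h1
        rw [Module.finrank_fin_fun] at h1
        change Module.finrank K (Submodule.dualCoannihilator _) = 3
        omega
      · change U ≤ Submodule.dualCoannihilator _
        rw [← Submodule.le_dualAnnihilator_iff_le_dualCoannihilator]
        exact Submodule.map_subtype_le _ _
    · rintro ⟨h3, hU⟩
      have h1 := Subspace.finrank_add_finrank_dualAnnihilator_eq W
      simp [h3] at h1
      have hle : W.dualAnnihilator ≤ U.dualAnnihilator := Submodule.dualAnnihilator_anti hU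
      obtain ⟨x, hx⟩ := exists_point_map U.dualAnnihilator W.dualAnnihilator hle (by omega)
      refine ⟨x, ?_⟩
      simp only [g]
      rw [hx, Subspace.dualAnnihilator_dualCoannihilator_eq]
  rw [← hr, ← Set.image_univ, Set.ncard_image_of_injective _ hg, Set.ncard_univ]

lemma finrank_line (K : Type*) [Field K] (p r : Projectivization K (Fin 4 → K)) (h : p ≠ r) :
    Module.finrank K (p.submodule ⊔ r.submodule : Submodule K (Fin 4 → K)) = 2 := by
  have h1 := Submodule.finrank_sup_add_finrank_inf_eq p.submodule r.submodule
  rw [Projectivization.finrank_submodule, Projectivization.finrank_submodule] at h1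
  have h2 : p.submodule < p.submodule ⊔ r.submodule := by
    refine lt_of_le_of_ne le_sup_left fun he => h ?_
    have hle : r.submodule ≤ p.submodule := he ▸ le_sup_right
    refine (Projectivization.submodule_injective (Submodule.eq_of_le_of_finrank_eq hle ?_)).symm
    rw [Projectivization.finrank_submodule, Projectivization.finrank_submodule]
  have h3 := Submodule.finrank_lt_finrank_of_lt h2
  rw [Projectivization.finrank_submodule] at h3
  omega

/-- Let P₀ be a set of points of PG(3,Q) with |P₀| = m(Q+1), m ≥ 1, such that
every plane contains exactly m or exactly m+Q points of P₀. Then every point of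
P₀ lies on exactly m+Q planes containing exactly m+Q points of P₀, and every
point not in P₀ lies on exactly m such planes. -/
theorem stmt_14 (K : Type*) [Field K] [Fintype K] (Q : ℕ) (hQ : Q = Fintype.card K)
    (m : ℕ) (hm : 1 ≤ m)
    (P0 : Set (Projectivization K (Fin 4 → K)))
    (hcard : P0.ncard = m * (Q + 1))
    (hplanes : ∀ W : Submodule K (Fin 4 → K), Module.finrank K W = 3 →
      {p ∈ P0 | p.submodule ≤ W}.ncard = m ∨ {p ∈ P0 | p.submodule ≤ W}.ncard = m + Q)
    (p : Projectivization K (Fin 4 → K)) :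
    (p ∈ P0 →
      {W : Submodule K (Fin 4 → K) | Module.finrank K W = 3 ∧
        {r ∈ P0 | r.submodule ≤ W}.ncard = m + Q ∧ p.submodule ≤ W}.ncard = m + Q) ∧
    (p ∉ P0 →
      {W : Submodule K (Fin 4 → K) | Module.finrank K W = 3 ∧
        {r ∈ P0 | r.submodule ≤ W}.ncard = m + Q ∧ p.submodule ≤ W}.ncard = m) := by
  subst hQ
  set Q := Fintype.card K with hQdef
  have hQ0 : 0 < Q := Fintype.card_pos
  haveI : Finite (Projectivization K (Fin 4 → K)) := inferInstance
  haveI : Fintype (Projectivization K (Fin 4 → K)) := Fintype.ofFinite _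
  haveI : Fintype (Submodule K (Fin 4 → K)) := Fintype.ofFinite _
  let S : Finset (Projectivization K (Fin 4 → K)) := P0.toFinset
  let T : Finset (Submodule K (Fin 4 → K)) :=
    Finset.univ.filter fun W => Module.finrank K W = 3 ∧ p.submodule ≤ W
  have hS : S.card = m * (Q + 1) := by
    rw [← hcard, Set.ncard_eq_toFinset_card']
  have hT : T.card = Q ^ 2 + Q + 1 := by
    have := planes_through K p.submodule
    rw [Projectivization.finrank_submodule, Set.ncard_eq_toFinset_card'] at this
    simp [Finset.sum_range_succ] at this
    simp only [T]
    rw [this]; ring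
  have hdc := Finset.sum_card_bipartiteAbove_eq_sum_card_bipartiteBelow
    (s := S) (t := T) (fun r W => r.submodule ≤ W)
  let B : Finset (Submodule K (Fin 4 → K)) :=
    T.filter fun W => {r ∈ P0 | r.submodule ≤ W}.ncard = m + Q
  have hB : {W : Submodule K (Fin 4 → K) | Module.finrank K W = 3 ∧
        {r ∈ P0 | r.submodule ≤ W}.ncard = m + Q ∧ p.submodule ≤ W}.ncard = B.card := by
    rw [← Set.ncard_coe_finset]
    congr 1
    ext W
    simp [B, T]
    tauto
  rw [hB]
  have hR : ∑ W ∈ T, (Finset.bipartiteBelow (fun r W => r.submodule ≤ W) S W).card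
      = m * (Q ^ 2 + Q + 1) + Q * B.card := by
    have : ∀ W ∈ T, (Finset.bipartiteBelow (fun r W => r.submodule ≤ W) S W).card
        = m + if {r ∈ P0 | r.submodule ≤ W}.ncard = m + Q then Q else 0 := by
      intro W hW
      have hc : (Finset.bipartiteBelow (fun r W => r.submodule ≤ W) S W).card =
          {r ∈ P0 | r.submodule ≤ W}.ncard := by
        rw [← Set.ncard_coe_finset]
        congr 1
        ext r
        simp [S, Finset.bipartiteBelow]
      rw [hc]
      split_ifs with h
      · exact h
      · exact (hplanes W (by simpa [T] using (Finset.mem_filter.1 hW).2.1)).resolve_right h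
    rw [Finset.sum_congr rfl this, Finset.sum_add_distrib, ← Finset.sum_filter]
    simp only [Finset.sum_const, smul_eq_mul, hT]
    simp only [B]
    ring
  have hL1 : ∀ r, r ≠ p →
      (Finset.bipartiteAbove (fun r W => r.submodule ≤ W) T r).card = Q + 1 := by
    intro r hr
    have := planes_through K (p.submodule ⊔ r.submodule)
    rw [finrank_line K p r hr.symm] at this
    simp [Finset.sum_range_succ] at this
    rw [← Set.ncard_coe_finset, hQdef, add_comm, ← this]
    congr 1
    ext W
    simp [T, Finset.bipartiteAbove]
    tauto
  have hL2 : (Finset.bipartiteAbove (fun r W => r.submodule ≤ W) T p).card = Q ^ 2 + Q + 1 := by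
    rw [← hT]
    congr 1
    ext W
    simp [T, Finset.bipartiteAbove]
  rw [hR] at hdc
  constructor
  · intro hp
    have hpS : p ∈ S := by simpa [S] using hp
    rw [← Finset.add_sum_erase _ _ hpS, hL2,
      Finset.sum_congr rfl (fun r hr => hL1 r (Finset.ne_of_mem_erase hr)),
      Finset.sum_const, smul_eq_mul] at hdc
    have h1 := Finset.card_erase_add_one hpS
    rw [hS] at h1
    apply Nat.eq_of_mul_eq_mul_left hQ0
    have h2 : ((S.erase p).card + 1) * (Q + 1) = m * (Q + 1) * (Q + 1) := by rw [h1]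
    nlinarith
  · intro hp
    have hne : ∀ r ∈ S, r ≠ p := by
      rintro r hr rfl
      exact hp (by simpa [S] using hr)
    rw [Finset.sum_congr rfl (fun r hr => hL1 r (hne r hr)),
      Finset.sum_const, smul_eq_mul, hS] at hdc
    apply Nat.eq_of_mul_eq_mul_left hQ0
    nlinarith
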